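/- Let p ≥ 5 be a prime, K a field of characteristic p, and write θ_{s,t}(X) = a_{(p−1)/2} X^{(p−1)/2} + Σ_{i=1}^{(p−3)/2} a_{(p−1)/2+pi} X^{(p−1)/2−i} + a_{(p²−1)/2} for the polynomial with θ_{s,t}(x^p) = ψ_{p,s,t}(x) mod p. Then a_{(p−1)/2} divides a_{(p−1)/2+pi} in K[s,t] for every 1 ≤ i ≤ (p−3)/2, and a_{(p−1)/2} and a_{(p²−1)/2} are relatively prime in K[s,t]. -/

import Mathlib

open WeierstrassCurve Polynomial

/-- The Weierstrass curve `y² = x³ + sx + t` over the polynomial ring `R[s,t]`, where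
`s = X 0` and `t = X 1` in `MvPolynomial (Fin 2) R`. -/
noncomputable def Wst (R : Type*) [CommRing R] : WeierstrassCurve (MvPolynomial (Fin 2) R) :=
  { a₁ := 0, a₂ := 0, a₃ := 0, a₄ := MvPolynomial.X 0, a₆ := MvPolynomial.X 1 }

/-!
The vector field dual to the invariant differential is translation invariant, so if `P` moves along
it with velocity `1`, then `n • P` moves with velocity `n`. Differentiating the logarithm of
`ψₙ₊₁ψₙ₋₁ = ψₙ² (x(P) - x(nP))` twice thus gives, by induction on `n`, the Toda equation
`ψₙ D²ψₙ - (Dψₙ)² = n² ψₙ₊₁ψₙ₋₁` for the derivation `D = 2y d/dx`.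

For `n = p = 2q + 1`, the `x`-derivative of `ψₚ` is `pκ` with `κ` integral. Dividing the Toda
equation by `p` and reducing modulo `p` leaves `2gκ' + g'κ = 0`, where `g = 4(x³ + sx + t)`. Hence
`κ gᵠ⁺¹` has derivative zero, so it is `c(xᵖ)` for some `c`, and the Cartier operator turns
`gᵖκ = gᵠ c(xᵖ)` into `g⁽ᵖ⁾θ' = h c`, where the Hasse invariant `h` is the coefficient of `xᵖ⁻¹` in
`gᵠ` and `g⁽ᵖ⁾` is `g` with its coefficients raised to the `p`-th power. The leading coefficients of
`g` and `c` are units. Hence `h` divides `θ'`, and comparing leading coefficients shows that it is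
the leading coefficient of `θ` up to a unit.

A prime `π` dividing all coefficients of `θ` would make `ψₚ` vanish identically on the reduction of
the curve modulo `π`. But `s` and `t` do not both vanish modulo `π`, so the reduced cubic has a
simple root in characteristic `≠ 3`; this is the `x`-coordinate of a smooth point of order two,
where `ψₚ` cannot vanish.
-/

open scoped Differential in
theorem exists_differential_extending {R S T : Type*} [CommRing R] [CommRing S] [CommRing T]
    [Algebra R S] [Algebra S T] [Algebra R T] [IsScalarTower R S T] [Algebra.FormallyEtale S T]
    (d : Derivation R S T) : ∃ _ : Differential T, ∀ s, (algebraMap S T s)′ = d s := by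
  let e := KaehlerDifferential.tensorKaehlerEquivOfFormallyEtale R S T
  let D : Derivation R T T :=
    ((d.liftKaehlerDifferential.liftBaseChange T).comp e.symm.toLinearMap).compDer
      (KaehlerDifferential.D R T)
  refine ⟨⟨D.restrictScalars ℤ⟩, fun s ↦ ?_⟩
  change D (algebraMap S T s) = d s
  simp [D, e, KaehlerDifferential.tensorKaehlerEquivOfFormallyEtale_symm_D_algebraMap]

theorem formallyEtale_algebraicClosure_fractionRing (S : Type*) [CommRing S] [IsDomain S]
    [CharZero S] : Algebra.FormallyEtale S (AlgebraicClosure (FractionRing S)) :=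
  have : CharZero (FractionRing S) := IsFractionRing.charZero S
  have := Algebra.FormallyEtale.of_isLocalization (Rₘ := FractionRing S) (nonZeroDivisors S)
  have := Algebra.FormallyEtale.of_isSeparable (FractionRing S) (AlgebraicClosure (FractionRing S))
  Algebra.FormallyEtale.comp S (FractionRing S) _

theorem algebraMap_algebraicClosure_fractionRing_injective (S : Type*) [CommRing S] [IsDomain S] :
    Function.Injective (algebraMap S (AlgebraicClosure (FractionRing S))) :=
  have := FaithfulSMul.trans S (FractionRing S) (AlgebraicClosure (FractionRing S))
  FaithfulSMul.algebraMap_injective _ _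

/-! ### The translation-invariant vector field -/

theorem evalEval_polynomialX_add_slope_mul {F : Type*} [Field F] [DecidableEq F] {W : Affine F}
    {x₁ y₁ x₂ y₂ : F} (h₁ : W.Equation x₁ y₁) (h₂ : W.Equation x₂ y₂)
    (hxy : ¬(x₁ = x₂ ∧ y₁ = W.negY x₂ y₂)) {ℓ x₃ : F} (hℓ : ℓ = W.slope x₁ x₂ y₁ y₂)
    (hx₃ : x₃ = W.addX x₁ x₂ ℓ) (r : F) :
    W.polynomialX.evalEval r (ℓ * (r - x₁) + y₁) +
        ℓ * W.polynomialY.evalEval r (ℓ * (r - x₁) + y₁) =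
      -((r - x₁) * (r - x₂) + (r - x₁) * (r - x₃) + (r - x₂) * (r - x₃)) := by
  have tangent := congrArg (eval r) (Affine.derivative_addPolynomial_slope h₁ h₂ hxy)
  rw [← hℓ, ← hx₃, Affine.addPolynomial_eq, Cubic.toPoly] at tangent
  simp only [map_one, one_mul, map_add, map_sub, map_neg, map_pow, map_mul, neg_mul, neg_add_rev,
    neg_sub, derivative_sq, derivative_C, mul_zero, derivative_mul, zero_mul, add_zero, sub_self,
    neg_zero, derivative_X, mul_one, zero_add, neg_neg, derivative_X_pow_succ, Nat.cast_ofNat,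
    eval_add, eval_neg, eval_C, eval_mul, eval_sub, eval_pow, eval_X, eval_one] at tangent
  rw [Affine.evalEval_polynomialX, Affine.evalEval_polynomialY]
  linear_combination tangent

theorem slope_mul_sub_add {F : Type*} [Field F] [DecidableEq F] {W : Affine F}
    {x₁ y₁ x₂ y₂ : F} (h₁ : W.Equation x₁ y₁) (h₂ : W.Equation x₂ y₂)
    (hxy : ¬(x₁ = x₂ ∧ y₁ = W.negY x₂ y₂)) : W.slope x₁ x₂ y₁ y₂ * (x₂ - x₁) + y₁ = y₂ := by
  by_cases hx : x₁ = x₂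
  · rw [hx, sub_self, mul_zero, zero_add, Affine.Y_eq_of_Y_ne h₁ h₂ hx fun h ↦ hxy ⟨hx, h⟩]
  · rw [Affine.slope_of_X_ne hx]
    field_simp [sub_ne_zero.2 hx]
    ring

section Velocity

open scoped Differential

variable {F : Type*} [Field F] [Differential F] {W : Affine F}

/-- The coefficients of a Weierstrass curve over a differential field are constants. -/
structure HasConstantCoeffs (W : WeierstrassCurve F) : Prop where
  a₁ : W.a₁′ = 0
  a₂ : W.a₂′ = 0
  a₃ : W.a₃′ = 0
  a₄ : W.a₄′ = 0
  a₆ : W.a₆′ = 0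

/-- The point `P` of a Weierstrass curve over a differential field moves with velocity `c` along
the translation-invariant vector field `W_Y ∂_X - W_X ∂_Y`, which is dual to the invariant
differential `dx / (2y + a₁x + a₃)`. -/
def HasVelocity (c : F) : W.Point → Prop
  | .zero => c = 0
  | .some x y _ => x′ = c * W.polynomialY.evalEval x y ∧ y′ = -(c * W.polynomialX.evalEval x y)

@[simp]
theorem differential_ofNat (n : ℕ) [n.AtLeastTwo] : (ofNat(n) : F)′ = 0 :=
  Differential.deriv.map_natCast n

@[simp]
theorem hasVelocity_zero {c : F} : HasVelocity c (0 : W.Point) ↔ c = 0 :=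
  Iff.rfl

theorem HasVelocity.add_eq_zero {c d x y : F} {h : W.Nonsingular x y}
    {h' : W.Nonsingular x (W.negY x y)} (hW : HasConstantCoeffs W)
    (hc : HasVelocity c (Affine.Point.some x y h))
    (hd : HasVelocity d (Affine.Point.some x (W.negY x y) h')) : c + d = 0 := by
  obtain ⟨hx, hy⟩ := hc
  obtain ⟨hx', hy'⟩ := hd
  rw [Affine.negY, map_sub, map_sub, map_neg, Derivation.leibniz, hW.a₁, hW.a₃] at hy'
  rw [Affine.evalEval_polynomialY] at hx hx'
  rw [Affine.evalEval_polynomialX] at hy hy'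
  rw [Affine.negY] at hx'
  have hX : (c + d) * W.polynomialX.evalEval x y = 0 := by
    rw [Affine.evalEval_polynomialX]
    simp only [smul_eq_mul] at hy'
    linear_combination hy + hy' + W.a₁ * hx'
  have hY : (c + d) * W.polynomialY.evalEval x y = 0 := by
    rw [Affine.evalEval_polynomialY]
    linear_combination hx' - hx
  rcases h.right with h | h
  · exact (mul_eq_zero.1 hX).resolve_right h
  · exact (mul_eq_zero.1 hY).resolve_right h

variable [DecidableEq F]

theorem HasVelocity.deriv_slope (hW : HasConstantCoeffs W) {c d x₁ y₁ x₂ y₂ : F}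
    {h₁ : W.Nonsingular x₁ y₁} {h₂ : W.Nonsingular x₂ y₂} (hxy : ¬(x₁ = x₂ ∧ y₁ = W.negY x₂ y₂))
    (hc : HasVelocity c (Affine.Point.some x₁ y₁ h₁))
    (hd : HasVelocity d (Affine.Point.some x₂ y₂ h₂)) {ℓ x₃ : F} (hℓ : ℓ = W.slope x₁ x₂ y₁ y₂)
    (hx₃ : x₃ = W.addX x₁ x₂ ℓ) :
    ℓ′ = c * (x₁ - x₃) + d * (x₂ - x₃) := by
  have tangent := evalEval_polynomialX_add_slope_mul h₁.left h₂.left hxy hℓ hx₃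
  obtain ⟨hx₁, hy₁⟩ := hc
  obtain ⟨hx₂, hy₂⟩ := hd
  by_cases hx : x₁ = x₂
  · obtain rfl : y₁ = y₂ := Affine.Y_eq_of_Y_ne h₁.left h₂.left hx fun h ↦ hxy ⟨hx, h⟩
    subst hx
    have hη : W.polynomialY.evalEval x₁ y₁ ≠ 0 := by
      rw [Affine.evalEval_polynomialY]
      contrapose! hxy
      exact ⟨rfl, by rw [Affine.negY]; linear_combination hxy⟩
    obtain rfl : c = d := mul_right_cancel₀ hη (hx₁.symm.trans hx₂)
    have slope_mul := tangent x₁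
    simp only [sub_self, mul_zero, zero_add, zero_mul, neg_zero, add_zero] at slope_mul
    rw [Affine.evalEval_polynomialX, Affine.evalEval_polynomialY] at slope_mul
    rw [Affine.evalEval_polynomialX] at hy₁
    rw [Affine.evalEval_polynomialY] at hx₁ hη
    have slope_mul' := congrArg (·′) slope_mul
    simp only [map_add, map_sub, Derivation.leibniz, Derivation.leibniz_pow, smul_eq_mul, hW.a₁,
      hW.a₂, hW.a₃, hW.a₄, differential_ofNat, map_zero, hx₁, hy₁] at slope_mul'
    rw [hx₃, Affine.addX]
    apply mul_right_cancel₀ hη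
    linear_combination slope_mul' + c * (W.a₁ + 2 * ℓ) * slope_mul
  · have slope_mul : ℓ * (x₁ - x₂) = y₁ - y₂ := by
      rw [hℓ, Affine.slope_of_X_ne hx, div_mul_cancel₀ _ (sub_ne_zero.2 hx)]
    have tangent₁ := tangent x₁
    have tangent₂ := tangent x₂
    rw [show ℓ * (x₁ - x₁) + y₁ = y₁ by ring] at tangent₁
    rw [show ℓ * (x₂ - x₁) + y₁ = y₂ by linear_combination -slope_mul] at tangent₂
    have slope_mul' := congrArg (·′) slope_mul
    simp only [map_sub, Derivation.leibniz, smul_eq_mul, hx₁, hy₁, hx₂, hy₂] at slope_mul'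
    apply mul_right_cancel₀ (sub_ne_zero.2 hx)
    linear_combination slope_mul' - c * tangent₁ + d * tangent₂

theorem HasVelocity.add (hW : HasConstantCoeffs W) {c d : F} {P Q : W.Point}
    (hc : HasVelocity c P) (hd : HasVelocity d Q) : HasVelocity (c + d) (P + Q) := by
  rcases P with _ | ⟨x₁, y₁, h₁⟩
  · simpa [hasVelocity_zero.1 hc, ← Affine.Point.zero_def] using hd
  rcases Q with _ | ⟨x₂, y₂, h₂⟩
  · simpa [hasVelocity_zero.1 hd, ← Affine.Point.zero_def] using hc
  by_cases hxy : x₁ = x₂ ∧ y₁ = W.negY x₂ y₂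
  · obtain ⟨rfl, rfl⟩ := hxy
    rw [add_comm, Affine.Point.add_of_Y_eq rfl rfl, hasVelocity_zero]
    exact hd.add_eq_zero hW hc
  · rw [Affine.Point.add_some hxy]
    set ℓ := W.slope x₁ x₂ y₁ y₂ with hℓ
    set x₃ := W.addX x₁ x₂ ℓ with hx₃
    have hℓ' := hc.deriv_slope hW hxy hd hℓ hx₃
    have tangent := evalEval_polynomialX_add_slope_mul h₁.left h₂.left hxy hℓ hx₃
    have tangent₁ := tangent x₁
    have tangent₃ := tangent x₃
    have line₂ : ℓ * (x₂ - x₁) + y₁ = y₂ := slope_mul_sub_add h₁.left h₂.left hxy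
    obtain ⟨hx₁', hy₁'⟩ := hc
    obtain ⟨hx₂', hy₂'⟩ := hd
    simp only [Affine.evalEval_polynomialX, Affine.evalEval_polynomialY] at *
    have hx₃' : x₃′ = (c + d) * (2 * W.addY x₁ x₂ y₁ ℓ + W.a₁ * x₃ + W.a₃) := by
      have := congrArg (·′) hx₃
      simp only [Affine.addX, sq, map_add, map_sub, Derivation.leibniz,
        smul_eq_mul, hW.a₁, hW.a₂, hx₁', hx₂', hℓ'] at this
      rw [this, Affine.addY, Affine.negY, Affine.negAddY, ← hx₃]
      linear_combination 2 * d * line₂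
    refine ⟨by rw [Affine.evalEval_polynomialY]; exact hx₃', ?_⟩
    rw [Affine.evalEval_polynomialX]
    have hy₃ : W.addY x₁ x₂ y₁ ℓ = -(ℓ * (x₃ - x₁) + y₁) - W.a₁ * x₃ - W.a₃ := rfl
    rw [hy₃] at hx₃' ⊢
    simp only [map_neg, map_add, map_sub, Derivation.leibniz, smul_eq_mul, hW.a₁, hW.a₃, hx₁',
      hy₁', hx₃', hℓ']
    linear_combination c * tangent₁ + (c + d) * tangent₃

theorem HasVelocity.nsmul (hW : HasConstantCoeffs W) {c : F} {P : W.Point} (hc : HasVelocity c P)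
    (n : ℕ) : HasVelocity (n * c) (n • P) := by
  induction n with
  | zero => simp
  | succ n ih => simpa [succ_nsmul, add_mul] using ih.add hW hc

theorem HasVelocity.not_isOfFinAddOrder [CharZero F] (hW : HasConstantCoeffs W) {c : F} (hc : c ≠ 0)
    {P : W.Point} (h : HasVelocity c P) : ¬IsOfFinAddOrder P := by
  rw [isOfFinAddOrder_iff_nsmul_eq_zero]
  rintro ⟨n, hn, hnP⟩
  have := h.nsmul hW n
  rw [hnP, hasVelocity_zero] at this
  simp [hn.ne', hc] at this

end Velocity

section XCoord

variable {F : Type*} [Field F] {W : Affine F}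

/-- The `x`-coordinate of a point of a Weierstrass curve, with the junk value `1` at infinity. -/
noncomputable def xCoord (P : W.Point) : F :=
  P.xRep 0

@[simp]
theorem xCoord_some {x y : F} (h : W.Nonsingular x y) : xCoord (Affine.Point.some x y h) = x :=
  rfl

@[simp]
theorem xCoord_neg (P : W.Point) : xCoord (-P) = xCoord P := by
  rw [xCoord, Affine.Point.xRep_neg, xCoord]

/-- The symmetric form which, for `p = x(P)` and `q = x(Q)` with `p ≠ q`, is
`(p - q)² (x(P + Q) - r) (x(P - Q) - r)`. -/
def addSubForm (W : WeierstrassCurve F) (p q r : F) : F :=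
  (p * q) ^ 2 - W.b₄ * (p * q) - W.b₆ * (p + q) - W.b₈
    - r * (2 * (p + q) * (p * q) + W.b₂ * (p * q) + W.b₄ * (p + q) + W.b₆) + r ^ 2 * (p - q) ^ 2

theorem addSubForm_right_comm (p q r : F) : addSubForm W p q r = addSubForm W p r q := by
  simp only [addSubForm]
  ring

theorem xCoord_eq_iff {P Q : W.Point} (hP : P ≠ 0) (hQ : Q ≠ 0) :
    xCoord P = xCoord Q ↔ P = Q ∨ P = -Q := by
  rcases P with _ | ⟨x₁, y₁, h₁⟩
  · exact absurd rfl hP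
  rcases Q with _ | ⟨x₂, y₂, h₂⟩
  · exact absurd rfl hQ
  rw [← Affine.Point.xRep_eq_xRep_iff]
  simp

theorem evalEval_polynomialY_ne_zero_iff {x y : F} :
    W.polynomialY.evalEval x y ≠ 0 ↔ y ≠ W.negY x y := by
  rw [Affine.evalEval_polynomialY, Affine.negY, not_iff_not]
  constructor <;> intro h <;> linear_combination h

theorem evalEval_polynomialY_sq {x y : F} (h : W.Equation x y) :
    W.polynomialY.evalEval x y ^ 2 = W.Ψ₂Sq.eval x := by
  simp only [Affine.evalEval_polynomialY, Ψ₂Sq, b₂, b₄, b₆, eval_add, eval_mul, eval_pow, eval_C,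
    eval_X]
  linear_combination 4 * (Affine.equation_iff ..).1 h

variable [DecidableEq F]

theorem sq_mul_addX_slope {x₁ y₁ x₂ y₂ : F} (hx : x₁ ≠ x₂) :
    (x₁ - x₂) ^ 2 * W.addX x₁ x₂ (W.slope x₁ x₂ y₁ y₂) =
      (y₁ - y₂) ^ 2 + W.a₁ * (y₁ - y₂) * (x₁ - x₂) - (W.a₂ + x₁ + x₂) * (x₁ - x₂) ^ 2 := by
  rw [Affine.slope_of_X_ne hx, Affine.addX]
  field_simp [sub_ne_zero.2 hx]
  ring

theorem sq_mul_xCoord_sub_mul_xCoord_sub {P Q : W.Point} (hP : P ≠ 0) (hQ : Q ≠ 0)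
    (hPQ : xCoord P ≠ xCoord Q) (r : F) :
    (xCoord P - xCoord Q) ^ 2 * ((xCoord (P + Q) - r) * (xCoord (P - Q) - r)) =
      addSubForm W (xCoord P) (xCoord Q) r := by
  rcases P with _ | ⟨x₁, y₁, h₁⟩
  · exact absurd rfl hP
  rcases Q with _ | ⟨x₂, y₂, h₂⟩
  · exact absurd rfl hQ
  simp only [xCoord_some] at hPQ ⊢
  have h_add := sq_mul_addX_slope (W := W) (y₁ := y₁) (y₂ := y₂) hPQ
  have h_sub := sq_mul_addX_slope (W := W) (y₁ := y₁) (y₂ := W.negY x₂ y₂) hPQ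
  rw [sub_eq_add_neg (Affine.Point.some x₁ y₁ h₁), Affine.Point.neg_some,
    Affine.Point.add_some fun h ↦ hPQ h.1, Affine.Point.add_some fun h ↦ hPQ h.1, xCoord_some,
    xCoord_some]
  generalize W.addX x₁ x₂ (W.slope x₁ x₂ y₁ y₂) = X₁ at *
  generalize W.addX x₁ x₂ (W.slope x₁ x₂ y₁ (W.negY x₂ y₂)) = X₂ at *
  have h_prod := congrArg₂ (· * ·) h_add h_sub
  have h_eq₁ := (Affine.equation_iff ..).1 h₁.left
  have h_eq₂ := (Affine.equation_iff ..).1 h₂.left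
  apply mul_left_cancel₀ (pow_ne_zero 2 (sub_ne_zero.2 hPQ))
  simp only [addSubForm, b₂, b₄, b₆, b₈, Affine.negY] at *
  linear_combination h_prod - r * (x₁ - x₂) ^ 2 * (h_add + h_sub)
    + ((y₁ ^ 2 + W.a₁ * x₁ * y₁ + W.a₃ * y₁) - (y₂ ^ 2 + W.a₁ * x₂ * y₂ + W.a₃ * y₂) +
      (x₁ ^ 3 + W.a₂ * x₁ ^ 2 + W.a₄ * x₁) - (x₂ ^ 3 + W.a₂ * x₂ ^ 2 + W.a₄ * x₂) +
      W.a₁ * (x₁ - x₂) * (W.a₁ * x₁ + W.a₃)) * (h_eq₁ - h_eq₂)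
    - W.a₁ ^ 2 * (x₁ - x₂) ^ 2 * h_eq₁
    - 2 * (W.a₂ + x₁ + x₂ + r) * (x₁ - x₂) ^ 2 * (h_eq₁ + h_eq₂)

theorem sq_mul_xCoord_two_nsmul_sub {x y : F} (h : W.Nonsingular x y)
    (hη : W.polynomialY.evalEval x y ≠ 0) (r : F) :
    W.polynomialY.evalEval x y ^ 2 * (xCoord (2 • Affine.Point.some x y h) - r) =
      addSubForm W x x r := by
  have hy := evalEval_polynomialY_ne_zero_iff.1 hη
  have h_eq := (Affine.equation_iff ..).1 h.left
  rw [two_nsmul, Affine.Point.add_self_of_Y_ne hy, xCoord_some, Affine.slope_of_Y_ne rfl hy,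
    Affine.addX, Affine.evalEval_polynomialY]
  rw [Affine.evalEval_polynomialY] at hη
  rw [show y - W.negY x y = 2 * y + W.a₁ * x + W.a₃ by rw [Affine.negY]; ring]
  field_simp
  simp only [addSubForm, b₂, b₄, b₆, b₈]
  linear_combination -(8 * x + 4 * W.a₂ + W.a₁ ^ 2 + 4 * r) * h_eq

end XCoord

section LogDeriv
open scoped Differential

variable {F : Type*} [Field F] [Differential F] {W : Affine F}

theorem HasVelocity.deriv_polynomialY (hW : HasConstantCoeffs W) {c x y : F}
    {h : W.Nonsingular x y} (hc : HasVelocity c (Affine.Point.some x y h)) :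
    (W.polynomialY.evalEval x y)′ = c * (6 * x ^ 2 + W.b₂ * x + W.b₄) := by
  obtain ⟨hx, hy⟩ := hc
  rw [Affine.evalEval_polynomialX] at hy
  rw [Affine.evalEval_polynomialY] at hx ⊢
  simp only [map_add, Derivation.leibniz, smul_eq_mul, hx, hy, hW.a₁, hW.a₃, differential_ofNat,
    b₂, b₄]
  ring

theorem deriv_logDeriv {a : F} (ha : a ≠ 0) :
    (Differential.logDeriv a)′ = (a′′ * a - a′ ^ 2) / a ^ 2 := by
  rw [Differential.logDeriv, Derivation.leibniz_div]
  simp only [smul_eq_mul]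
  field_simp

variable [DecidableEq F]

theorem HasVelocity.deriv_logDeriv_polynomialY (hW : HasConstantCoeffs W) {c x y : F} (hc' : c′ = 0)
    {h : W.Nonsingular x y} (hc : HasVelocity c (Affine.Point.some x y h))
    (hη : W.polynomialY.evalEval x y ≠ 0) :
    (Differential.logDeriv (W.polynomialY.evalEval x y))′ =
      4 * c ^ 2 * (x - xCoord (2 • Affine.Point.some x y h)) := by
  have hx2 := sq_mul_xCoord_two_nsmul_sub h hη 0
  have hη2 := evalEval_polynomialY_sq h.left
  have hη' := hc.deriv_polynomialY hW
  have hη'' := congrArg (·′) hη'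
  simp only [sq, b₂, b₄, Derivation.leibniz, map_add, smul_eq_mul, hW.a₁, hW.a₂, hW.a₃, hW.a₄, hc',
    differential_ofNat, hc.1] at hη''
  rw [deriv_logDeriv hη, div_eq_iff (pow_ne_zero 2 hη), hη'', hη']
  simp only [ne_eq, sub_zero, addSubForm, b₄, b₆, b₈, b₂, zero_mul, OfNat.ofNat_ne_zero,
    not_false_eq_true, zero_pow, sub_self, mul_zero, add_zero, Ψ₂Sq, map_add, map_pow, map_mul,
    eval_add, eval_mul, eval_C, eval_pow, eval_X] at *
  linear_combination 4 * c ^ 2 * hx2 + c ^ 2 * (8 * x + W.a₁ ^ 2 + 4 * W.a₂) * hη2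

theorem HasVelocity.deriv_logDeriv_xCoord_sub (hW : HasConstantCoeffs W) {c d : F} (hc' : c′ = 0)
    (hd' : d′ = 0) {P Q : W.Point} (hc : HasVelocity c P) (hd : HasVelocity d Q) (hP : P ≠ 0)
    (hQ : Q ≠ 0) (hPQ : xCoord P ≠ xCoord Q) :
    (Differential.logDeriv (xCoord P - xCoord Q))′ =
      2 * c ^ 2 * xCoord P + 2 * d ^ 2 * xCoord Q - (c + d) ^ 2 * xCoord (P + Q)
        - (c - d) ^ 2 * xCoord (P - Q) := by
  rcases P with _ | ⟨x₁, y₁, h₁⟩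
  · exact absurd rfl hP
  rcases Q with _ | ⟨x₂, y₂, h₂⟩
  · exact absurd rfl hQ
  have hη₁' := hc.deriv_polynomialY hW
  have hη₂' := hd.deriv_polynomialY hW
  obtain ⟨hx₁', -⟩ := hc
  obtain ⟨hx₂', -⟩ := hd
  simp only [xCoord_some] at hPQ ⊢
  have h_add := sq_mul_addX_slope (W := W) (y₁ := y₁) (y₂ := y₂) hPQ
  have h_sub := sq_mul_addX_slope (W := W) (y₁ := y₁) (y₂ := W.negY x₂ y₂) hPQ
  rw [sub_eq_add_neg (Affine.Point.some x₁ y₁ h₁), Affine.Point.neg_some,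
    Affine.Point.add_some fun h ↦ hPQ h.1, Affine.Point.add_some fun h ↦ hPQ h.1, xCoord_some,
    xCoord_some, deriv_logDeriv (sub_ne_zero.2 hPQ), div_eq_iff (pow_ne_zero 2 (sub_ne_zero.2 hPQ))]
  simp only [map_sub, hx₁', hx₂', Derivation.leibniz, hη₁', hη₂', hc', hd', smul_eq_mul]
  have h_eq₁ := (Affine.equation_iff ..).1 h₁.left
  have h_eq₂ := (Affine.equation_iff ..).1 h₂.left
  simp only [Affine.evalEval_polynomialY, Affine.negY, b₂, b₄] at *
  linear_combination (c + d) ^ 2 * h_add + (c - d) ^ 2 * h_sub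
    - 2 * (c ^ 2 - d ^ 2) * (h_eq₁ - h_eq₂)

end LogDeriv

/-! ### The Toda equation for division polynomials -/

theorem eq_normEDS_of_recurrence {R : Type*} [CommRing R] [IsDomain R] {w : ℕ → R} {b c d : R}
    (hb : b ≠ 0) (zero : w 0 = 0) (one : w 1 = 1) (two : w 2 = b) (three : w 3 = c)
    (four : w 4 = d * b)
    (even : ∀ m, w (2 * (m + 3)) * b =
      w (m + 2) ^ 2 * w (m + 3) * w (m + 5) - w (m + 1) * w (m + 3) * w (m + 4) ^ 2)
    (odd : ∀ m, w (2 * (m + 2) + 1) = w (m + 4) * w (m + 2) ^ 3 - w (m + 1) * w (m + 3) ^ 3)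
    (n : ℕ) : w n = normEDS b c d n := by
  induction n using normEDSRec with
  | zero => simp [zero]
  | one => simp [one]
  | two => simp [two]
  | three => simp [three]
  | four => simp [four]
  | even m h₁ h₂ h₃ h₄ h₅ =>
    apply mul_right_cancel₀ hb
    rw [even, h₁, h₂, h₃, h₄, h₅]
    push_cast
    rw [normEDS_even]
    ring_nf
  | odd m h₁ h₂ h₃ h₄ =>
    rw [odd, h₁, h₂, h₃, h₄]
    push_cast
    rw [normEDS_odd]
    ring_nf

section Toda

variable {F : Type*} [Field F] [DecidableEq F] {W : Affine F}

/-- The sequence `w` with `w 0 = 0`, `w 1 = 1`, `w 2 = b` which satisfies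
`w (n + 1) * w (n - 1) = w n ^ 2 * (x(P) - x(n • P))`. It turns out to be the sequence of values
of the division polynomials at `P`. -/
noncomputable def todaSeq (P : W.Point) (b : F) : ℕ → F
  | 0 => 0
  | 1 => 1
  | 2 => b
  | n + 3 =>
    todaSeq P b (n + 2) ^ 2 * (xCoord P - xCoord ((n + 2) • P)) / todaSeq P b (n + 1)

@[simp]
theorem todaSeq_zero (P : W.Point) (b : F) : todaSeq P b 0 = 0 := rfl

@[simp]
theorem todaSeq_one (P : W.Point) (b : F) : todaSeq P b 1 = 1 := rfl

@[simp]
theorem todaSeq_two (P : W.Point) (b : F) : todaSeq P b 2 = b := rfl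

variable {P : W.Point}

theorem nsmul_ne_zero_of_pos (hP : ¬IsOfFinAddOrder P) {n : ℕ} (hn : 0 < n) : n • P ≠ 0 :=
  fun h ↦ hP (isOfFinAddOrder_iff_nsmul_eq_zero.2 ⟨n, hn, h⟩)

theorem xCoord_nsmul_ne (hP : ¬IsOfFinAddOrder P) {m n : ℕ} (hm : 0 < m) (hmn : m < n) :
    xCoord (m • P) ≠ xCoord (n • P) := by
  rw [Ne, xCoord_eq_iff (nsmul_ne_zero_of_pos hP hm) (nsmul_ne_zero_of_pos hP (hm.trans hmn))]
  rintro (h | h)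
  · exact hmn.ne (injective_nsmul_iff_not_isOfFinAddOrder.2 hP h)
  · refine nsmul_ne_zero_of_pos hP (add_pos hm (hm.trans hmn)) ?_
    rw [add_nsmul, h, neg_add_cancel]

theorem sq_mul_xCoord_succ_nsmul_sub (hP : ¬IsOfFinAddOrder P) {n : ℕ} (hn : 0 < n) (r : F) :
    (xCoord P - xCoord ((n + 1) • P)) ^ 2 *
      ((xCoord ((n + 2) • P) - r) * (xCoord (n • P) - r)) =
      addSubForm W (xCoord P) (xCoord ((n + 1) • P)) r := by
  have hP' : P ≠ 0 := by simpa using nsmul_ne_zero_of_pos hP one_pos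
  have h := xCoord_nsmul_ne hP one_pos (Nat.lt_add_of_pos_left hn)
  rw [one_nsmul] at h
  rw [← sq_mul_xCoord_sub_mul_xCoord_sub hP' (nsmul_ne_zero_of_pos hP n.succ_pos) h,
    succ_nsmul' P n, sub_add_cancel_left, xCoord_neg, ← succ_nsmul' P n, ← succ_nsmul' P (n + 1)]

variable {b : F}

theorem todaSeq_ne_zero (hP : ¬IsOfFinAddOrder P) (hb : b ≠ 0) {n : ℕ} (hn : 0 < n) :
    todaSeq P b n ≠ 0 := by
  induction n using Nat.strong_induction_on with
  | _ n ih =>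
  match n with
  | 1 => simp [todaSeq]
  | 2 => simpa [todaSeq]
  | n + 3 =>
    have hx := xCoord_nsmul_ne hP one_pos (by lia : 1 < n + 2)
    rw [one_nsmul] at hx
    exact div_ne_zero (mul_ne_zero (pow_ne_zero 2 (ih _ (by lia) (by lia))) (sub_ne_zero.2 hx))
      (ih _ (by lia) (by lia))

theorem todaSeq_mul (hP : ¬IsOfFinAddOrder P) (hb : b ≠ 0) (n : ℕ) :
    todaSeq P b (n + 2) * todaSeq P b n =
      todaSeq P b (n + 1) ^ 2 * (xCoord P - xCoord ((n + 1) • P)) := by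
  match n with
  | 0 => simp [todaSeq]
  | n + 1 => exact div_mul_cancel₀ _ (todaSeq_ne_zero hP hb n.succ_pos)

theorem sq_mul_xCoord_nsmul_sub_comm (hP : ¬IsOfFinAddOrder P) {m n : ℕ} (hm : 0 < m)
    (hn : 0 < n) :
    (xCoord P - xCoord ((m + 1) • P)) ^ 2 *
      ((xCoord ((m + 2) • P) - xCoord ((n + 1) • P)) *
        (xCoord (m • P) - xCoord ((n + 1) • P))) =
      (xCoord P - xCoord ((n + 1) • P)) ^ 2 *
        ((xCoord ((n + 2) • P) - xCoord ((m + 1) • P)) *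
          (xCoord (n • P) - xCoord ((m + 1) • P))) := by
  rw [sq_mul_xCoord_succ_nsmul_sub hP hm, sq_mul_xCoord_succ_nsmul_sub hP hn,
    addSubForm_right_comm]

theorem todaSeq_add_four_mul (hP : ¬IsOfFinAddOrder P) (hb : b ≠ 0)
    (hb2 : ∀ r, b ^ 2 * (xCoord (2 • P) - r) = addSubForm W (xCoord P) (xCoord P) r) (n : ℕ) :
    todaSeq P b (n + 4) * todaSeq P b n =
      todaSeq P b (n + 2) ^ 2 * b ^ 2 * (xCoord (2 • P) - xCoord ((n + 2) • P)) := by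
  have h_form := sq_mul_xCoord_succ_nsmul_sub hP n.succ_pos (xCoord P)
  rw [addSubForm_right_comm, ← hb2] at h_form
  have toda := todaSeq_mul hP hb
  have toda₁ := congrArg (· ^ 2) (toda (n + 1))
  apply mul_right_cancel₀ (pow_ne_zero 2 (todaSeq_ne_zero hP hb (by lia : 0 < n + 2)))
  linear_combination todaSeq P b (n + 2) * todaSeq P b n * toda (n + 2) +
    todaSeq P b (n + 3) ^ 2 * (xCoord P - xCoord ((n + 3) • P)) * toda n +
    (xCoord P - xCoord ((n + 3) • P)) * (xCoord P - xCoord ((n + 1) • P)) * toda₁ +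
    todaSeq P b (n + 2) ^ 4 * h_form

theorem todaSeq_mul_todaSeq (hP : ¬IsOfFinAddOrder P) (hb : b ≠ 0)
    (hb2 : ∀ r, b ^ 2 * (xCoord (2 • P) - r) = addSubForm W (xCoord P) (xCoord P) r)
    {n r m k : ℕ} (hm : m = n + 1 + r) (hk : k = m + (n + 1)) :
    todaSeq P b k * todaSeq P b r =
      todaSeq P b m ^ 2 * todaSeq P b (n + 1) ^ 2 * (xCoord ((n + 1) • P) - xCoord (m • P)) := by
  have toda := todaSeq_mul hP hb
  have hw {n} := todaSeq_ne_zero hP hb (n := n)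
  induction n using Nat.strong_induction_on generalizing r m k with
  | _ n ih =>
  match n with
  | 0 =>
    obtain rfl : m = r + 1 := by lia
    rw [show k = r + 2 by lia, zero_add, todaSeq_one, one_nsmul, toda]
    ring
  | 1 =>
    obtain rfl : m = r + 2 := by lia
    rw [show k = r + 4 by lia, one_add_one_eq_two, todaSeq_two, todaSeq_add_four_mul hP hb hb2]
  | n + 2 =>
    obtain rfl : m = n + r + 3 := by lia
    obtain rfl : k = 2 * n + r + 6 := by lia
    have ih₁ := @ih (n + 1) (by lia) (r + 2) (n + r + 4) (2 * n + r + 6) (by lia) (by lia)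
    have ih₂ := @ih (n + 1) (by lia) r (n + r + 2) (2 * n + r + 4) (by lia) (by lia)
    have ih₃ := @ih n (by lia) (r + 2) (n + r + 3) (2 * n + r + 4) (by lia) (by lia)
    have h_comm := sq_mul_xCoord_nsmul_sub_comm hP (by lia : 0 < n + r + 2) n.succ_pos
    have toda₁ := congrArg (· ^ 2) (toda (n + r + 2))
    have toda₂ := congrArg (· ^ 2) (toda (n + 1))
    have h_ne := mul_ne_zero (mul_ne_zero (hw (by lia : 0 < 2 * n + r + 4))
      (hw (by lia : 0 < r + 2))) (pow_ne_zero 2 (hw (by lia : 0 < n + 1)))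
    clear ih
    generalize todaSeq P b = w at *
    apply mul_right_cancel₀ h_ne
    linear_combination
      w (n + 1) ^ 2 * w (2 * n + r + 4) * w r * ih₁ +
      w (n + 1) ^ 2 * w (n + 2) ^ 2 * w (n + r + 4) ^ 2 *
        (xCoord ((n + 2) • P) - xCoord ((n + r + 4) • P)) * ih₂ +
      w (n + 1) ^ 2 * w (n + 2) ^ 4 * (xCoord ((n + 2) • P) - xCoord ((n + r + 4) • P)) *
        (xCoord ((n + 2) • P) - xCoord ((n + r + 2) • P)) * toda₁ +
      w (n + 1) ^ 2 * w (n + 2) ^ 4 * w (n + r + 3) ^ 4 * h_comm -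
      w (n + 1) ^ 2 * w (n + r + 3) ^ 4 * (xCoord ((n + 3) • P) - xCoord ((n + r + 3) • P)) *
        (xCoord ((n + 1) • P) - xCoord ((n + r + 3) • P)) * toda₂ -
      w (n + 1) ^ 2 * w (n + 3) ^ 2 * w (n + r + 3) ^ 2 *
        (xCoord ((n + 3) • P) - xCoord ((n + r + 3) • P)) * ih₃

theorem todaSeq_odd (hP : ¬IsOfFinAddOrder P) (hb : b ≠ 0)
    (hb2 : ∀ r, b ^ 2 * (xCoord (2 • P) - r) = addSubForm W (xCoord P) (xCoord P) r) (m : ℕ) :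
    todaSeq P b (2 * m + 3) =
      todaSeq P b (m + 3) * todaSeq P b (m + 1) ^ 3 - todaSeq P b m * todaSeq P b (m + 2) ^ 3 := by
  have h_ell := todaSeq_mul_todaSeq hP hb hb2 (n := m) (r := 1) (m := m + 2) (k := 2 * m + 3)
    (by lia) (by lia)
  rw [todaSeq_one] at h_ell
  linear_combination h_ell -
    todaSeq P b (m + 1) ^ 2 * todaSeq_mul hP hb (m + 1) +
    todaSeq P b (m + 2) ^ 2 * todaSeq_mul hP hb m

theorem todaSeq_even (hP : ¬IsOfFinAddOrder P) (hb : b ≠ 0)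
    (hb2 : ∀ r, b ^ 2 * (xCoord (2 • P) - r) = addSubForm W (xCoord P) (xCoord P) r) (m : ℕ) :
    todaSeq P b (2 * m + 4) * b =
      todaSeq P b (m + 1) ^ 2 * todaSeq P b (m + 2) * todaSeq P b (m + 4) -
        todaSeq P b m * todaSeq P b (m + 2) * todaSeq P b (m + 3) ^ 2 := by
  have h_ell := todaSeq_mul_todaSeq hP hb hb2 (n := m) (r := 2) (m := m + 3) (k := 2 * m + 4)
    (by lia) (by lia)
  rw [todaSeq_two] at h_ell
  linear_combination h_ell -
    todaSeq P b (m + 1) ^ 2 * todaSeq_mul hP hb (m + 2) +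
    todaSeq P b (m + 3) ^ 2 * todaSeq_mul hP hb m

section Values

variable {x y : F} {h : W.Nonsingular x y}

theorem todaSeq_three (hη : W.polynomialY.evalEval x y ≠ 0) :
    todaSeq (.some x y h) (W.polynomialY.evalEval x y) 3 = W.Ψ₃.eval x := by
  have h_two := sq_mul_xCoord_two_nsmul_sub h hη x
  simp only [addSubForm] at h_two
  simp only [todaSeq, xCoord_some, zero_add, div_one, Ψ₃, eval_add, eval_mul, eval_ofNat, eval_pow,
    eval_X, eval_C]
  linear_combination -h_two

theorem sq_Ψ₃_mul_sub_xCoord_three_nsmul (hη : W.polynomialY.evalEval x y ≠ 0)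
    (hP : ¬IsOfFinAddOrder (Affine.Point.some x y h)) :
    W.Ψ₃.eval x ^ 2 * (x - xCoord (3 • Affine.Point.some x y h)) =
      W.preΨ₄.eval x * W.Ψ₂Sq.eval x := by
  have h_form := sq_mul_xCoord_succ_nsmul_sub hP one_pos
  have h_two := sq_mul_xCoord_two_nsmul_sub h hη 0
  have h_three := sq_mul_xCoord_two_nsmul_sub h hη x
  -- The coefficient of `r` in `h_form r` is the formula for `x(3P) + x(P)`.
  have h_sum := congrArg₂ (· - ·) (h_form 0) (h_form 1)
  rw [evalEval_polynomialY_sq h.left] at *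
  simp only [xCoord_some, Nat.reduceAdd, one_smul, addSubForm, Ψ₃, Ψ₂Sq, preΨ₄, map_sub, map_mul,
    map_pow, map_ofNat, eval_add, eval_sub, eval_mul, eval_ofNat, eval_pow, eval_X, eval_C] at *
  generalize xCoord (2 • Affine.Point.some x y h) = X₂ at *
  generalize xCoord (3 • Affine.Point.some x y h) = X₃ at *
  generalize hg : 4 * x ^ 3 + W.b₂ * x ^ 2 + 2 * W.b₄ * x + W.b₆ = g at *
  generalize hT : 3 * x ^ 4 + W.b₂ * x ^ 3 + 3 * W.b₄ * x ^ 2 + 3 * W.b₆ * x + W.b₈ = T at *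
  have h_three : T = g * (x - X₂) := by linear_combination h_three - hT
  have h_two : g * X₂ = x ^ 4 - W.b₄ * x ^ 2 - 2 * W.b₆ * x - W.b₈ := by
    linear_combination h_two
  have h_sum : (x - X₂) ^ 2 * (x + X₃) =
      2 * x * X₂ ^ 2 + (2 * x ^ 2 + W.b₂ * x + W.b₄) * X₂ + W.b₄ * x + W.b₆ := by
    linear_combination h_sum
  have h_elim : T ^ 2 * (x - X₃) = 2 * x * T ^ 2 - 2 * x * (g * X₂) ^ 2 -
      (2 * x ^ 2 + W.b₂ * x + W.b₄) * (g * X₂) * g - (W.b₄ * x + W.b₆) * g ^ 2 := by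
    linear_combination -(T + g * (x - X₂)) * (x + X₃) * h_three - g ^ 2 * h_sum
  rw [h_elim, h_two, ← hT, ← hg]
  linear_combination -x ^ 2 * (4 * x ^ 3 + W.b₂ * x ^ 2 + 2 * W.b₄ * x + W.b₆) * W.b_relation

theorem todaSeq_four (hη : W.polynomialY.evalEval x y ≠ 0)
    (hP : ¬IsOfFinAddOrder (Affine.Point.some x y h)) :
    todaSeq (.some x y h) (W.polynomialY.evalEval x y) 4 =
      W.preΨ₄.eval x * W.polynomialY.evalEval x y := by
  have h_toda := todaSeq_mul hP hη 2
  rw [todaSeq_two, todaSeq_three hη, xCoord_some, sq_Ψ₃_mul_sub_xCoord_three_nsmul hη hP,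
    ← evalEval_polynomialY_sq h.left] at h_toda
  apply mul_right_cancel₀ hη
  linear_combination h_toda

theorem todaSeq_eq_normEDS (hη : W.polynomialY.evalEval x y ≠ 0)
    (hP : ¬IsOfFinAddOrder (Affine.Point.some x y h)) (n : ℕ) :
    todaSeq (.some x y h) (W.polynomialY.evalEval x y) n =
      normEDS (W.polynomialY.evalEval x y) (W.Ψ₃.eval x) (W.preΨ₄.eval x) n := by
  have hη2 := sq_mul_xCoord_two_nsmul_sub h hη
  exact eq_normEDS_of_recurrence hη (todaSeq_zero ..) (todaSeq_one ..) (todaSeq_two ..)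
    (todaSeq_three hη) (todaSeq_four hη hP) (fun m ↦ todaSeq_even hP hη hη2 (m + 1))
    (fun m ↦ todaSeq_odd hP hη hη2 (m + 1)) n

theorem todaSeq_eq_eval_preΨ' (hη : W.polynomialY.evalEval x y ≠ 0)
    (hP : ¬IsOfFinAddOrder (Affine.Point.some x y h)) (n : ℕ) :
    todaSeq (.some x y h) (W.polynomialY.evalEval x y) n =
      (W.preΨ' n).eval x * if Even n then W.polynomialY.evalEval x y else 1 := by
  rw [todaSeq_eq_normEDS hη hP, normEDS_ofNat, preΨ', ← coe_evalRingHom, map_preNormEDS', map_pow,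
    coe_evalRingHom, ← evalEval_polynomialY_sq h.left, ← pow_mul]

end Values

end Toda

section DerivToda

open scoped Differential

variable {F : Type*} [Field F] [CharZero F] [Differential F] {W : Affine F} {x y : F}
  {h : W.Nonsingular x y}

theorem deriv_logDeriv_todaSeq [DecidableEq F] (hW : HasConstantCoeffs W)
    (h_vel : HasVelocity 1 (Affine.Point.some x y h)) (hη : W.polynomialY.evalEval x y ≠ 0)
    (n : ℕ) :
    (Differential.logDeriv (todaSeq (.some x y h) (W.polynomialY.evalEval x y) (n + 1)))′ =
      (n + 1) ^ 2 * (x - xCoord ((n + 1) • Affine.Point.some x y h)) := by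
  have hP := h_vel.not_isOfFinAddOrder hW one_ne_zero
  have hw {n} := todaSeq_ne_zero hP hη (n := n)
  have h_const (n : ℕ) : ((n : F) * 1)′ = 0 := by simp
  induction n using Nat.twoStepInduction with
  | zero => simp
  | one =>
    rw [one_add_one_eq_two, todaSeq_two,
      h_vel.deriv_logDeriv_polynomialY hW Differential.deriv.map_one_eq_zero hη]
    norm_num
  | more n ih₁ ih₂ =>
    have hx := xCoord_nsmul_ne hP one_pos (by lia : 1 < n + 2)
    rw [one_nsmul] at hx
    have hP' := nsmul_ne_zero_of_pos hP one_pos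
    rw [one_nsmul] at hP'
    have h_sub := h_vel.deriv_logDeriv_xCoord_sub hW Differential.deriv.map_one_eq_zero
      (h_const (n + 2)) (h_vel.nsmul hW (n + 2)) hP' (nsmul_ne_zero_of_pos hP (by lia)) hx
    rw [succ_nsmul' _ (n + 1), sub_add_cancel_left, xCoord_neg, ← succ_nsmul' _ (n + 1),
      ← succ_nsmul' _ (n + 2), xCoord_some] at h_sub
    have toda := congrArg (fun z ↦ (Differential.logDeriv z)′) (todaSeq_mul hP hη (n + 1))
    beta_reduce at toda
    rw [Differential.logDeriv_mul _ _ (hw (by lia)) (hw (by lia)),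
      Differential.logDeriv_mul _ _ (pow_ne_zero 2 (hw (by lia))) (sub_ne_zero.2 hx),
      Differential.logDeriv_pow, map_add, map_add, Derivation.leibniz, smul_eq_mul, smul_eq_mul,
      Derivation.map_natCast, ih₁, ih₂, xCoord_some, h_sub] at toda
    push_cast [differential_ofNat] at *
    linear_combination toda

theorem todaSeq_mul_deriv_deriv [DecidableEq F] (hW : HasConstantCoeffs W)
    (h_vel : HasVelocity 1 (Affine.Point.some x y h)) (hη : W.polynomialY.evalEval x y ≠ 0) (n : ℕ)
    {w : ℕ → F} (hw : w = todaSeq (.some x y h) (W.polynomialY.evalEval x y)) :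
    w (n + 1) * (w (n + 1))′′ - (w (n + 1))′ ^ 2 = (n + 1) ^ 2 * (w (n + 2) * w n) := by
  have hP := h_vel.not_isOfFinAddOrder hW one_ne_zero
  have hwn := todaSeq_ne_zero hP hη n.succ_pos
  have h_log := deriv_logDeriv_todaSeq hW h_vel hη n
  rw [deriv_logDeriv hwn, div_eq_iff (pow_ne_zero 2 hwn)] at h_log
  rw [hw, todaSeq_mul hP hη, xCoord_some]
  linear_combination h_log

theorem eval_preΨ'_mul_deriv_deriv (hW : HasConstantCoeffs W)
    (h_vel : HasVelocity 1 (Affine.Point.some x y h)) (hη : W.polynomialY.evalEval x y ≠ 0) {n : ℕ}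
    (hn : Even n) :
    (W.preΨ' (n + 1)).eval x * ((W.preΨ' (n + 1)).eval x)′′ - ((W.preΨ' (n + 1)).eval x)′ ^ 2 =
      (n + 1) ^ 2 * (W.Ψ₂Sq * W.preΨ' (n + 2) * W.preΨ' n).eval x := by
  classical
  have h_toda := todaSeq_mul_deriv_deriv hW h_vel hη n rfl
  simp only [todaSeq_eq_eval_preΨ' hη (h_vel.not_isOfFinAddOrder hW one_ne_zero), hn, hn.add_one,
    hn.add even_two, if_true, Nat.not_even_iff_odd.2, if_false, mul_one] at h_toda
  rw [h_toda, eval_mul, eval_mul, ← evalEval_polynomialY_sq h.left]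
  ring

end DerivToda

section Transfer

open scoped Differential

theorem hasVelocity_one_of_deriv_eq {F : Type*} [Field F] [Differential F] {W : Affine F} {x y : F}
    (hW : HasConstantCoeffs W) (h : W.Nonsingular x y) (hη : W.polynomialY.evalEval x y ≠ 0)
    (hx : x′ = W.polynomialY.evalEval x y) : HasVelocity 1 (Affine.Point.some x y h) := by
  have h_eq := congrArg (·′) ((W.equation_iff x y).1 h.left)
  have tangent : W.polynomialY.evalEval x y * y′ + W.polynomialX.evalEval x y * x′ = 0 := by
    simp only [map_add, Derivation.leibniz, Derivation.leibniz_pow, hW.a₁, hW.a₂, hW.a₃, hW.a₄,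
      hW.a₆, smul_eq_mul, nsmul_eq_mul] at h_eq
    rw [Affine.evalEval_polynomialX, Affine.evalEval_polynomialY]
    push_cast at h_eq
    linear_combination h_eq
  refine ⟨by rw [one_mul, hx], mul_left_cancel₀ hη ?_⟩
  linear_combination tangent - W.polynomialX.evalEval x y * hx

theorem exists_equation_of_sq_eq {F : Type*} [Field F] (h2 : (2 : F) ≠ 0) {W : Affine F}
    {x η : F} (hη : η ^ 2 = W.Ψ₂Sq.eval x) :
    ∃ y, W.Equation x y ∧ W.polynomialY.evalEval x y = η := by
  have hy : 2 * ((η - W.a₁ * x - W.a₃) / 2) = η - W.a₁ * x - W.a₃ := mul_div_cancel₀ _ h2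
  set y := (η - W.a₁ * x - W.a₃) / 2
  have hη' : W.polynomialY.evalEval x y = η := by
    rw [Affine.evalEval_polynomialY]
    linear_combination hy
  refine ⟨y, (W.equation_iff x y).2 (mul_left_cancel₀ (mul_ne_zero h2 h2) ?_), hη'⟩
  rw [← hη', Affine.evalEval_polynomialY] at hη
  simp only [Ψ₂Sq, b₂, b₄, b₆, eval_add, eval_mul, eval_pow, eval_C, eval_X] at hη
  linear_combination hη

variable {A : Type*} [CommRing A]

theorem map_preΨ'_mul_derivative_derivative {F : Type*} [Field F] [CharZero F] [Differential F]
    {ι : A[X] →+* F} {η : F} (W : WeierstrassCurve A) (hι : ∀ f, (ι f)′ = ι (derivative f) * η)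
    (hη₀ : η ≠ 0) (hη : η ^ 2 = ι W.Ψ₂Sq) {n : ℕ} (hn : Even n) {ψ : A[X]}
    (hψ : ψ = W.preΨ' (n + 1)) :
    ι (ψ * (2 * W.Ψ₂Sq * derivative (derivative ψ) + derivative W.Ψ₂Sq * derivative ψ)
        - 2 * W.Ψ₂Sq * derivative ψ ^ 2) =
      ι (2 * (n + 1) ^ 2 * (W.Ψ₂Sq * W.preΨ' (n + 2) * W.preΨ' n)) := by
  classical
  let V : Affine F := W.map (ι.comp C)
  have h_eval (f : A[X]) : (f.map (ι.comp C)).eval (ι X) = ι f := by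
    rw [eval_map, ← hom_eval₂, eval₂_C_X]
  obtain ⟨y, h_eq, hy⟩ := exists_equation_of_sq_eq (W := V) (two_ne_zero (α := F)) (x := ι X)
    (hη.trans (by rw [map_Ψ₂Sq, h_eval]))
  have hη₀' : V.polynomialY.evalEval (ι X) y ≠ 0 := hy ▸ hη₀
  have hV : HasConstantCoeffs V := by constructor <;> simp [V, hι]
  have h_vel := hasVelocity_one_of_deriv_eq hV ⟨h_eq, .inr hη₀'⟩ hη₀' (by simp [hι, hy])
  have h_toda := eval_preΨ'_mul_deriv_deriv hV h_vel hη₀' hn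
  rw [map_preΨ', map_preΨ', map_preΨ', map_Ψ₂Sq, ← Polynomial.map_mul, ← Polynomial.map_mul,
    h_eval, h_eval, ← hψ, hι, Derivation.leibniz, hι, smul_eq_mul, smul_eq_mul] at h_toda
  have hη' : 2 * η′ = ι (derivative W.Ψ₂Sq) := by
    have h_sq := congrArg (·′) hη
    simp only [hι, sq, Derivation.leibniz, smul_eq_mul] at h_sq
    apply mul_left_cancel₀ hη₀
    linear_combination h_sq
  simp only [map_sub, map_add, map_mul, map_pow, map_ofNat, map_natCast, map_one] at h_toda ⊢
  linear_combination 2 * h_toda - ι ψ * ι (derivative ψ) * hη' +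
    (2 * ι (derivative ψ) ^ 2 - 2 * ι ψ * ι (derivative (derivative ψ))) * hη

theorem preΨ'_mul_derivative_derivative [IsDomain A] [CharZero A] (W : WeierstrassCurve A) {n : ℕ}
    (hn : Even n) {ψ : A[X]} (hψ : ψ = W.preΨ' (n + 1)) :
    ψ * (2 * W.Ψ₂Sq * derivative (derivative ψ) + derivative W.Ψ₂Sq * derivative ψ)
        - 2 * W.Ψ₂Sq * derivative ψ ^ 2 =
      2 * (n + 1) ^ 2 * (W.Ψ₂Sq * W.preΨ' (n + 2) * W.preΨ' n) := by
  let F := AlgebraicClosure (FractionRing A[X])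
  have := formallyEtale_algebraicClosure_fractionRing A[X]
  have h_inj := algebraMap_algebraicClosure_fractionRing_injective A[X]
  obtain ⟨η, hη⟩ := IsAlgClosed.exists_pow_nat_eq (algebraMap A[X] F W.Ψ₂Sq) two_pos
  have hη₀ : η ≠ 0 := by
    rintro rfl
    exact W.Ψ₂Sq_ne_zero (by norm_num) (h_inj (by simpa using hη.symm))
  obtain ⟨_, h_deriv⟩ := exists_differential_extending (T := F) (mkDerivation A η)
  refine h_inj (map_preΨ'_mul_derivative_derivative W (fun f ↦ ?_) hη₀ hη hn hψ)
  rw [h_deriv, mkDerivation_apply, Algebra.smul_def]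

end Transfer

/-! ### Non-vanishing of division polynomials of odd index -/

section NonVanishing

theorem eval_preΨ'_two_mul_add_one_ne_zero {R : Type*} [CommRing R] [IsDomain R]
    {W : WeierstrassCurve R} {r : R} (h₂ : W.Ψ₂Sq.eval r = 0) (h₃ : W.Ψ₃.eval r ≠ 0) (m : ℕ) :
    (W.preΨ' (2 * m + 1)).eval r ≠ 0 := by
  induction m using Nat.strong_induction_on with
  | _ m ih =>
    match m, ih with
    | 0, _ => simp
    | 1, _ => simpa using h₃
    | j + 2, ih =>
      rw [preΨ'_odd]
      rcases j.even_or_odd' with ⟨i, rfl | rfl⟩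
      · have h₁ := ih i (by lia)
        have h₃ := ih (i + 1) (by lia)
        rw [show 2 * (i + 1) + 1 = 2 * i + 3 by ring] at h₃
        simp [h₂, h₁, h₃]
      · have h₂' := ih (i + 1) (by lia)
        have h₄ := ih (i + 2) (by lia)
        rw [show 2 * (i + 1) + 1 = 2 * i + 1 + 2 by ring] at h₂'
        rw [show 2 * (i + 2) + 1 = 2 * i + 1 + 4 by ring] at h₄
        simp [h₂, h₂', h₄]

theorem exists_simple_root_cubic {F : Type*} [Field F] [IsAlgClosed F] (h3 : (3 : F) ≠ 0) {a b : F}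
    (hab : a ≠ 0 ∨ b ≠ 0) : ∃ r, r ^ 3 + a * r + b = 0 ∧ 3 * r ^ 2 + a ≠ 0 := by
  have h_deg : (X ^ 3 + C a * X + C b).degree = 3 := by compute_degree!
  obtain ⟨r, hr⟩ := IsAlgClosed.exists_root (X ^ 3 + C a * X + C b) (by rw [h_deg]; decide)
  replace hr : r ^ 3 + a * r + b = 0 := by simpa using hr
  by_cases h_double : 3 * r ^ 2 + a = 0
  · -- The roots sum to zero, so the third root is `-2r`.
    refine ⟨-2 * r, by linear_combination hr - 3 * r * h_double, fun h_triple ↦ ?_⟩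
    have hr₀ : 3 * (3 * r ^ 2) = 0 := by linear_combination h_triple - h_double
    obtain rfl : r = 0 := by simpa [h3] using hr₀
    simp_all
  · exact ⟨r, hr, h_double⟩

theorem exists_eval_Ψ₂Sq_eq_zero_eval_Ψ₃_ne_zero {F : Type*} [Field F] [IsAlgClosed F]
    (h3 : (3 : F) ≠ 0) (W : WeierstrassCurve F) [W.IsShortNF] (hW : W.a₄ ≠ 0 ∨ W.a₆ ≠ 0) :
    ∃ r, W.Ψ₂Sq.eval r = 0 ∧ W.Ψ₃.eval r ≠ 0 := by
  obtain ⟨r, hr, hr'⟩ := exists_simple_root_cubic h3 hW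
  refine ⟨r, ?_, ?_⟩
  · simp only [Ψ₂Sq, b₂_of_isShortNF, b₄_of_isShortNF, b₆_of_isShortNF, eval_add, eval_mul,
      eval_pow, eval_C, eval_X]
    linear_combination 4 * hr
  · have h_sq : W.Ψ₃.eval r = -(3 * r ^ 2 + W.a₄) ^ 2 := by
      simp only [Ψ₃, b₂_of_isShortNF, b₄_of_isShortNF, b₆_of_isShortNF, b₈_of_isShortNF, eval_add,
        eval_mul, eval_pow, eval_C, eval_X, eval_ofNat]
      linear_combination 12 * r * hr
    rw [h_sq]
    exact neg_ne_zero.2 (pow_ne_zero 2 hr')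

theorem preΨ'_ne_zero_of_odd {R : Type*} [CommRing R] [IsDomain R] (h3 : (3 : R) ≠ 0)
    (W : WeierstrassCurve R) [W.IsShortNF] (hW : W.a₄ ≠ 0 ∨ W.a₆ ≠ 0) {n : ℕ} (hn : Odd n) :
    W.preΨ' n ≠ 0 := by
  obtain ⟨m, rfl⟩ := hn
  let ι := algebraMap R (AlgebraicClosure (FractionRing R))
  have hι {a : R} : ι a ≠ 0 ↔ a ≠ 0 :=
    map_ne_zero_iff ι (algebraMap_algebraicClosure_fractionRing_injective R)
  have : (W.map ι).IsShortNF := by constructor <;> simp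
  obtain ⟨r, h₂, h₃⟩ := exists_eval_Ψ₂Sq_eq_zero_eval_Ψ₃_ne_zero
    (by rw [← map_ofNat ι 3]; exact hι.2 h3) (W.map ι) (hW.imp hι.2 hι.2)
  have h_eval := eval_preΨ'_two_mul_add_one_ne_zero h₂ h₃ m
  contrapose! h_eval
  rw [map_preΨ', h_eval, Polynomial.map_zero, eval_zero]

end NonVanishing

/-! ### The Cartier operator -/

section Cartier

variable {R : Type*} [CommRing R] {p : ℕ}

/-- The Cartier operator `f dx ↦ (∑ₖ f_{pk+p-1} xᵏ) dx` on polynomial differential forms in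
characteristic `p`, without the `p`-th roots usually taken of the coefficients; it is thus linear
over the ring of polynomials in `xᵖ`. -/
noncomputable def cartier (p : ℕ) (f : R[X]) : R[X] :=
  divX (contract p (X * f))

theorem coeff_cartier (hp : p ≠ 0) (f : R[X]) (k : ℕ) :
    (cartier p f).coeff k = f.coeff (p * k + (p - 1)) := by
  rw [cartier, coeff_divX, coeff_contract hp,
    show (k + 1) * p = p * k + (p - 1) + 1 by rw [add_mul, mul_comm k]; lia, coeff_X_mul]

theorem X_mul_cartier (hp : p ≠ 0) (f : R[X]) : X * cartier p f = contract p (X * f) := by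
  conv_rhs => rw [← X_mul_divX_add (contract p (X * f))]
  simp [cartier, coeff_contract hp]

theorem cartier_expand_mul (hp : p ≠ 0) (f g : R[X]) :
    cartier p (expand R p f * g) = f * cartier p g := by
  apply isRegular_X.left
  beta_reduce
  rw [X_mul_cartier hp, mul_left_comm, mul_comm, contract_mul_expand hp, ← X_mul_cartier hp]
  ring

theorem cartier_eq_C {f : R[X]} (hp : p ≠ 0) (hf : f.natDegree < 2 * p - 1) :
    cartier p f = C (f.coeff (p - 1)) := by
  ext (_ | k)
  · simp [coeff_cartier hp]
  · rw [coeff_cartier hp, coeff_C_succ, coeff_eq_zero_of_natDegree_lt]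
    rw [mul_add]
    lia

theorem cartier_map_eq_derivative {A : Type*} [CommRing A] [IsDomain A] [CharZero A]
    {ρ : A →+* R} {ψ κ : A[X]} {θ : R[X]} (hp : p ≠ 0) (hκ : derivative ψ = (p : A[X]) * κ)
    (hθ : expand R p θ = ψ.map ρ) : cartier p (κ.map ρ) = derivative θ := by
  ext k
  have h_index : p * k + (p - 1) + 1 = p * (k + 1) := by rw [mul_add]; lia
  have h_coeff : κ.coeff (p * k + (p - 1)) = ψ.coeff (p * (k + 1)) * (k + 1) := by
    have h_deriv := congrArg (coeff · (p * k + (p - 1))) hκ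
    simp only [coeff_derivative, coeff_natCast_mul] at h_deriv
    rw [← Nat.cast_succ, Nat.succ_eq_add_one, h_index] at h_deriv
    apply mul_left_cancel₀ (Nat.cast_ne_zero.2 hp : (p : A) ≠ 0)
    push_cast at h_deriv
    linear_combination -h_deriv
  rw [coeff_cartier hp, coeff_map, h_coeff, map_mul, ← coeff_map, ← hθ,
    coeff_expand_mul' hp.pos, coeff_derivative]
  simp

theorem C_dvd_of_C_dvd_mul {a : R} {f g : R[X]} (hf : IsUnit f.leadingCoeff) (h : C a ∣ f * g) :
    C a ∣ g := by
  have h_mk {g : R[X]} : C a ∣ g ↔ g.map (Ideal.Quotient.mk (Ideal.span {a})) = 0 := by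
    simp [C_dvd_iff_dvd_coeff, Polynomial.ext_iff, Ideal.Quotient.eq_zero_iff_mem,
      Ideal.mem_span_singleton]
  rcases subsingleton_or_nontrivial (R ⧸ Ideal.span {a}) with _ | _
  · exact h_mk.2 (Subsingleton.elim _ _)
  rw [h_mk, Polynomial.map_mul, isUnit_leadingCoeff_mul_right_eq_zero_iff] at h
  · exact h_mk.2 h
  · rw [leadingCoeff_map_eq_of_isUnit_leadingCoeff _ hf]
    exact hf.map _

theorem cartier_mul_map_frobenius [IsDomain R] {q : ℕ} [Fact p.Prime] [CharP R p]
    (hpq : p = 2 * q + 1) {g κ : R[X]} (ode : 2 * g * derivative κ + derivative g * κ = 0)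
    (hg : g.natDegree ≤ 3) :
    ∃ c, expand R p c = κ * g ^ (q + 1) ∧
      g.map (frobenius R p) * cartier p κ = C ((g ^ q).coeff (p - 1)) * c := by
  have hp₀ : p ≠ 0 := by lia
  have hp : (2 * q + 1 : R[X]) = 0 := by
    rw [← CharP.cast_eq_zero R[X] p, hpq]
    push_cast
    rfl
  have h_const : derivative (κ * g ^ (q + 1)) = 0 := by
    rw [derivative_mul, derivative_pow_succ, C_add, C_1, map_natCast]
    linear_combination (derivative κ * g ^ (q + 1) + κ * g ^ q * derivative g) * hp -
      q * g ^ q * ode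
  refine ⟨contract p (κ * g ^ (q + 1)), expand_contract p h_const hp₀, ?_⟩
  have h_pow : expand R p (g.map (frobenius R p)) * κ =
      expand R p (contract p (κ * g ^ (q + 1))) * g ^ q := by
    rw [expand_contract p h_const hp₀, ← map_expand, map_frobenius_expand, mul_assoc, ← pow_add,
      mul_comm, hpq]
    ring
  have h_cartier := congrArg (cartier p) h_pow
  rwa [cartier_expand_mul hp₀, cartier_expand_mul hp₀, cartier_eq_C (f := g ^ q) hp₀,
    mul_comm _ (C _)] at h_cartier
  grw [natDegree_pow_le, hg]
  lia

theorem C_coeff_cartier_dvd [IsDomain R] {q M : ℕ} [Fact p.Prime] [CharP R p] (hpq : p = 2 * q + 1)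
    {g κ : R[X]} (ode : 2 * g * derivative κ + derivative g * κ = 0) (hg : g.natDegree ≤ 3)
    (hg₃ : IsUnit (g.coeff 3)) (hκ : κ.natDegree ≤ p * M + 3 * q)
    (h_top : IsUnit (κ.coeff (p * M + 3 * q))) :
    C ((cartier p κ).coeff M) ∣ cartier p κ := by
  have hp₀ : p ≠ 0 := by lia
  obtain ⟨c, hc, h_eq⟩ := cartier_mul_map_frobenius hpq ode hg
  set h := (g ^ q).coeff (p - 1)
  have h_deg : (cartier p κ).natDegree ≤ M := by
    refine natDegree_le_iff_coeff_eq_zero.2 fun k hk ↦ ?_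
    rw [coeff_cartier hp₀]
    refine coeff_eq_zero_of_natDegree_lt (hκ.trans_lt ?_)
    have := Nat.mul_le_mul_left p (Nat.succ_le_of_lt hk)
    grind
  have hg' : (g.map (frobenius R p)).natDegree ≤ 3 := natDegree_map_le.trans hg
  have h_c : c.coeff (3 + M) = κ.coeff (p * M + 3 * q) * g.coeff 3 ^ (q + 1) := by
    rw [← coeff_expand_mul' hp₀.pos, hc, ← coeff_pow_of_natDegree_le hg,
      ← coeff_mul_add_eq_of_natDegree_le hκ (natDegree_pow_le_of_le _ hg)]
    congr 1
    rw [hpq]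
    ring
  have h_dvd : (cartier p κ).coeff M ∣ h := by
    have h_coeff := congrArg (coeff · (3 + M)) h_eq
    simp only [coeff_mul_add_eq_of_natDegree_le hg' h_deg, coeff_C_mul, h_c, coeff_map] at h_coeff
    rw [← (h_top.mul (hg₃.pow (q + 1))).dvd_mul_right, ← h_coeff]
    exact dvd_mul_left _ _
  refine (_root_.map_dvd C h_dvd).trans (C_dvd_of_C_dvd_mul ?_ ⟨c, h_eq⟩)
  have h_lead : (g.map (frobenius R p)).natDegree = 3 := by
    refine natDegree_eq_of_le_of_coeff_ne_zero hg' ?_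
    rw [coeff_map]
    exact (hg₃.map _).ne_zero
  rw [leadingCoeff, h_lead, coeff_map]
  exact hg₃.map _

end Cartier

/-! ### Reduction modulo `p` -/

section Reduction

theorem natDegree_preΨ'_two_mul_add_one_le {A : Type*} [CommRing A] (W : WeierstrassCurve A)
    (q : ℕ) : (W.preΨ' (2 * q + 1)).natDegree ≤ 2 * q * (q + 1) := by
  refine (W.natDegree_preΨ'_le _).trans (Nat.div_le_of_le_mul ?_)
  rw [if_neg (by simp)]
  grind

theorem coeff_preΨ'_two_mul_add_one {A : Type*} [CommRing A] (W : WeierstrassCurve A) (q : ℕ) :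
    (W.preΨ' (2 * q + 1)).coeff (2 * q * (q + 1)) = (2 * q + 1 : ℕ) := by
  have h_coeff := W.coeff_preΨ' (2 * q + 1)
  rwa [if_neg (by simp), if_neg (by simp),
    show ((2 * q + 1) ^ 2 - 1) / 2 = 2 * q * (q + 1) by grind] at h_coeff

variable {A R : Type*} [CommRing A] [CommRing R] {p q : ℕ} {ρ : A →+* R} {W : WeierstrassCurve A}
  {θ : R[X]}

theorem natDegree_le_of_expand_eq_map_preΨ' (hpq : p = 2 * q + 1)
    (hθ : expand R p θ = (W.preΨ' p).map ρ) : θ.natDegree ≤ q := by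
  have h_deg := congrArg natDegree hθ
  rw [natDegree_expand] at h_deg
  have h_le : θ.natDegree * p ≤ 2 * q * (q + 1) :=
    h_deg ▸ natDegree_map_le.trans (hpq ▸ natDegree_preΨ'_two_mul_add_one_le W q)
  rw [hpq] at h_le
  by_contra! hq
  have := Nat.mul_le_mul_right (2 * q + 1) (Nat.succ_le_of_lt hq)
  grind

theorem exists_derivative_eq_natCast_mul [CharP R p] (hρ : ∀ a, ρ a = 0 → (p : A) ∣ a) {ψ : A[X]}
    (hθ : expand R p θ = ψ.map ρ) : ∃ κ, derivative ψ = (p : A[X]) * κ := by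
  change (p : A[X]) ∣ _
  rw [← C_eq_natCast, C_dvd_iff_dvd_coeff]
  intro k
  apply hρ
  rw [← coeff_map, ← derivative_map, ← hθ, derivative_expand, CharP.cast_eq_zero]
  simp

variable [IsDomain A] [CharZero A] {κ : A[X]}

theorem natDegree_le_of_derivative_preΨ'_eq (hpq : p = 2 * q + 1)
    (hκ : derivative (W.preΨ' p) = (p : A[X]) * κ) : κ.natDegree ≤ 2 * q * (q + 1) - 1 := by
  have hp : (p : A) ≠ 0 := by rw [hpq]; exact mod_cast (2 * q).succ_ne_zero
  rw [← natDegree_C_mul hp, C_eq_natCast, ← hκ, hpq]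
  exact (natDegree_derivative_le _).trans
    (Nat.sub_le_sub_right (natDegree_preΨ'_two_mul_add_one_le W q) 1)

theorem coeff_of_derivative_preΨ'_eq (hpq : p = 2 * q + 1) (hq : 0 < q)
    (hκ : derivative (W.preΨ' p) = (p : A[X]) * κ) :
    κ.coeff (2 * q * (q + 1) - 1) = (2 * q * (q + 1) : ℕ) := by
  have hp : (p : A) ≠ 0 := by rw [hpq]; exact mod_cast (2 * q).succ_ne_zero
  have h_pos : 0 < 2 * q * (q + 1) := by positivity
  apply mul_left_cancel₀ hp
  rw [← coeff_natCast_mul, ← hκ, coeff_derivative, ← Nat.cast_succ, Nat.succ_eq_add_one,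
    Nat.sub_add_cancel h_pos, hpq, coeff_preΨ'_two_mul_add_one]

theorem map_ode_of_derivative_preΨ'_eq [IsDomain R] [CharP R p] (hp : Odd p)
    (hψ : (W.preΨ' p).map ρ ≠ 0) (hκ : derivative (W.preΨ' p) = (p : A[X]) * κ) :
    2 * W.Ψ₂Sq.map ρ * derivative (κ.map ρ) + derivative (W.Ψ₂Sq.map ρ) * κ.map ρ = 0 := by
  obtain ⟨n, hn, rfl⟩ : ∃ n, Even n ∧ n + 1 = p :=
    ⟨p - 1, hp.tsub_odd odd_one, Nat.sub_add_cancel hp.pos⟩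
  have h_toda := preΨ'_mul_derivative_derivative W hn rfl
  set ψ := W.preΨ' (n + 1)
  have h_div : ψ * (2 * W.Ψ₂Sq * derivative κ + derivative W.Ψ₂Sq * κ) = ((n + 1 : ℕ) : A[X]) *
      (2 * W.Ψ₂Sq * κ ^ 2 + 2 * (W.Ψ₂Sq * W.preΨ' (n + 2) * W.preΨ' n)) := by
    apply mul_left_cancel₀ (Nat.cast_ne_zero.2 n.succ_ne_zero : ((n + 1 : ℕ) : A[X]) ≠ 0)
    simp only [hκ, derivative_mul, derivative_natCast] at h_toda
    push_cast at h_toda ⊢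
    linear_combination h_toda
  have h_red := congrArg (map ρ) h_div
  rw [Polynomial.map_mul, Polynomial.map_mul, Polynomial.map_natCast, CharP.cast_eq_zero R[X],
    zero_mul] at h_red
  simpa [derivative_map] using (mul_eq_zero.1 h_red).resolve_left hψ

theorem isUnit_natCast_of_lt_char {R : Type*} [Ring R] {p n : ℕ} [Fact p.Prime] [CharP R p]
    (hn₀ : 0 < n) (hn : n < p) : IsUnit (n : R) :=
  (CharP.isUnit_natCast_iff Fact.out).2 (Nat.not_dvd_of_pos_of_lt hn₀ hn)

theorem C_coeff_dvd_derivative_of_expand_eq_map_preΨ' [IsDomain R] [Fact p.Prime] [CharP R p]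
    (hpq : p = 2 * (q + 1) + 1) (hρ : ∀ a, ρ a = 0 → (p : A) ∣ a)
    (hθ : expand R p θ = (W.preΨ' p).map ρ) (hθ₀ : θ ≠ 0) :
    C (θ.coeff (q + 1)) ∣ derivative θ := by
  have hp : p ≠ 0 := by lia
  obtain ⟨κ, hκ⟩ := exists_derivative_eq_natCast_mul hρ hθ
  have ode := map_ode_of_derivative_preΨ'_eq ⟨q + 1, hpq⟩
    (hθ ▸ (expand_ne_zero hp.pos).2 hθ₀) hκ
  have h_index : p * q + 3 * (q + 1) = 2 * (q + 1) * (q + 1 + 1) - 1 := by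
    rw [hpq]
    grind
  have h_top : 2 * (q + 1) * (q + 1 + 1) = p * (q + 1) + (q + 1) := by
    rw [hpq]
    ring
  have h_dvd := C_coeff_cartier_dvd hpq (M := q) ode
    (natDegree_map_le.trans W.natDegree_Ψ₂Sq_le) ?_ ?_ ?_
  · rw [cartier_map_eq_derivative hp hκ hθ, coeff_derivative] at h_dvd
    exact (_root_.map_dvd C (dvd_mul_right _ _)).trans h_dvd
  · rw [coeff_map, coeff_Ψ₂Sq, map_ofNat]
    have h_two : IsUnit ((2 : ℕ) : R) := isUnit_natCast_of_lt_char two_pos (by lia)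
    exact mod_cast h_two.pow 2
  · rw [h_index]
    exact natDegree_map_le.trans (natDegree_le_of_derivative_preΨ'_eq hpq hκ)
  · rw [h_index, coeff_map, coeff_of_derivative_preΨ'_eq hpq q.succ_pos hκ, map_natCast, h_top,
      Nat.cast_add, Nat.cast_mul, CharP.cast_eq_zero, zero_mul, zero_add]
    exact isUnit_natCast_of_lt_char q.succ_pos (by lia)

theorem coeff_dvd_coeff_of_expand_eq_map_preΨ' [IsDomain R] [Fact p.Prime] [CharP R p]
    (hpq : p = 2 * q + 1) (hρ : ∀ a, ρ a = 0 → (p : A) ∣ a)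
    (hθ : expand R p θ = (W.preΨ' p).map ρ) {i : ℕ} (hi : 1 ≤ i) : θ.coeff q ∣ θ.coeff i := by
  rcases eq_or_ne θ 0 with rfl | hθ₀
  · simp
  rcases lt_or_ge q i with hqi | hiq
  · rw [coeff_eq_zero_of_natDegree_lt
      ((natDegree_le_of_expand_eq_map_preΨ' hpq hθ).trans_lt hqi)]
    exact dvd_zero _
  obtain ⟨q, rfl⟩ := Nat.exists_eq_add_of_le' (hi.trans hiq)
  obtain ⟨j, rfl⟩ := Nat.exists_eq_add_of_le' hi
  have h_dvd := (C_dvd_iff_dvd_coeff _ _).1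
    (C_coeff_dvd_derivative_of_expand_eq_map_preΨ' hpq hρ hθ hθ₀) j
  rw [coeff_derivative, ← Nat.cast_succ] at h_dvd
  exact (isUnit_natCast_of_lt_char j.succ_pos (by lia)).dvd_mul_right.1 h_dvd

end Reduction

section Generic

instance isShortNF_Wst (R : Type*) [CommRing R] : (Wst R).IsShortNF :=
  ⟨rfl, rfl, rfl⟩

theorem map_Wst {R S : Type*} [CommRing R] [CommRing S] (f : R →+* S) :
    (Wst R).map (MvPolynomial.map f) = Wst S := by
  simp [Wst, WeierstrassCurve.map]

theorem not_dvd_X_and_dvd_X_of_prime {σ R : Type*} [CommRing R] [IsDomain R]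
    {π : MvPolynomial σ R} (hπ : Prime π) {i j : σ} (hij : i ≠ j) :
    ¬(π ∣ MvPolynomial.X i ∧ π ∣ MvPolynomial.X j) := by
  rintro ⟨hi, hj⟩
  have h_assoc := hπ.irreducible.associated_of_dvd (MvPolynomial.X_prime (i := i)).irreducible hi
  exact hij (MvPolynomial.X_dvd_X.1 (h_assoc.symm.dvd.trans hj))

theorem not_C_dvd_preΨ'_Wst {K : Type*} [Field K] (h3 : (3 : K) ≠ 0) {n : ℕ} (hn : Odd n)
    {π : MvPolynomial (Fin 2) K} (hπ : Prime π) : ¬C π ∣ (Wst K).preΨ' n := by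
  have : (Ideal.span {π}).IsPrime := (Ideal.span_singleton_prime hπ.ne_zero).2 hπ
  let μ := Ideal.Quotient.mk (Ideal.span {π})
  have hμ {f} : μ f = 0 ↔ π ∣ f := Ideal.Quotient.eq_zero_iff_dvd π f
  have : ((Wst K).map μ).IsShortNF := by constructor <;> simp
  have h3' : (3 : MvPolynomial (Fin 2) K ⧸ Ideal.span {π}) ≠ 0 := by
    rw [← map_ofNat (μ.comp MvPolynomial.C) 3]
    exact (_root_.map_ne_zero _).2 h3
  have hX : μ (MvPolynomial.X 0) ≠ 0 ∨ μ (MvPolynomial.X 1) ≠ 0 := by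
    rw [← not_and_or, hμ, hμ]
    exact not_dvd_X_and_dvd_X_of_prime hπ zero_ne_one
  rintro ⟨f, hf⟩
  apply preΨ'_ne_zero_of_odd h3' ((Wst K).map μ) hX hn
  rw [map_preΨ', hf, Polynomial.map_mul, map_C, hμ.2 dvd_rfl, C_0, zero_mul]

theorem isPrimitive_preΨ'_Wst {K : Type*} [Field K] (h3 : (3 : K) ≠ 0) {n : ℕ} (hn : Odd n) :
    ((Wst K).preΨ' n).IsPrimitive := by
  intro d hd
  by_contra hd_unit
  obtain ⟨π, hπ, hπd⟩ := WfDvdMonoid.exists_irreducible_factor hd_unit <| by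
    rintro rfl
    exact not_C_dvd_preΨ'_Wst h3 hn (MvPolynomial.X_prime (i := 0))
      ((_root_.map_dvd C (dvd_zero _)).trans hd)
  exact not_C_dvd_preΨ'_Wst h3 hn hπ.prime ((_root_.map_dvd C hπd).trans hd)

theorem natCast_dvd_of_map_eq_zero {σ K : Type*} [CommRing K] (p : ℕ) [CharP K p]
    {a : MvPolynomial σ ℤ} (ha : MvPolynomial.map (Int.castRingHom K) a = 0) :
    (p : MvPolynomial σ ℤ) ∣ a := by
  rw [← map_natCast MvPolynomial.C, MvPolynomial.C_dvd_iff_map_hom_eq_zero (Int.castRingHom K)]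
  · exact ha
  · exact CharP.intCast_eq_zero_iff K p

theorem isRelPrime_coeff_zero_of_isPrimitive_expand {R : Type*} [CommRing R] {p q : ℕ} {θ : R[X]}
    (hθ : (expand R p θ).IsPrimitive) (h_dvd : ∀ i, 1 ≤ i → θ.coeff q ∣ θ.coeff i) :
    IsRelPrime (θ.coeff q) (θ.coeff 0) := by
  intro d hdq hd₀
  have hd : C d ∣ θ := (C_dvd_iff_dvd_coeff d θ).2 fun
    | 0 => hd₀
    | i + 1 => hdq.trans (h_dvd _ i.succ_pos)
  have h_expand := _root_.map_dvd (expand R p) hd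
  rw [expand_C] at h_expand
  exact hθ d h_expand

end Generic

/-- In `K[s,t]`, the leading coefficient `a_{(p-1)/2}` of `θ_{s,t}` divides every middle
coefficient `a_{(p-1)/2+pi}` for `1 ≤ i ≤ (p-3)/2`, and `a_{(p-1)/2}` is relatively prime to
the constant coefficient `a_{(p²-1)/2}`. -/
theorem theta_leadingCoeff_dvd_and_relPrime (p : ℕ) (hp : p.Prime) (hp5 : 5 ≤ p)
    (K : Type*) [Field K] [CharP K p]
    (θ : Polynomial (MvPolynomial (Fin 2) (ZMod p)))
    (hθ : θ.comp (Polynomial.X ^ p) =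
      ((Wst ℤ).preΨ (p : ℤ)).map (MvPolynomial.map (Int.castRingHom (ZMod p)))) :
    (∀ i, 1 ≤ i → i ≤ (p - 3) / 2 →
      MvPolynomial.map (ZMod.castHom (dvd_refl p) K) (θ.coeff ((p - 1) / 2)) ∣
        MvPolynomial.map (ZMod.castHom (dvd_refl p) K) (θ.coeff ((p - 1) / 2 - i))) ∧
    IsRelPrime (MvPolynomial.map (ZMod.castHom (dvd_refl p) K) (θ.coeff ((p - 1) / 2)))
      (MvPolynomial.map (ZMod.castHom (dvd_refl p) K) (θ.coeff 0)) := by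
  have : Fact p.Prime := ⟨hp⟩
  have hp_odd : Odd p := hp.odd_of_ne_two (by lia)
  have h_unit : IsUnit ((3 : ℕ) : K) := isUnit_natCast_of_lt_char three_pos (by lia)
  set σ := MvPolynomial.map (σ := Fin 2) (ZMod.castHom (dvd_refl p) K)
  have hσ : σ.comp (MvPolynomial.map (Int.castRingHom (ZMod p))) =
      MvPolynomial.map (Int.castRingHom K) := by
    ext <;> simp [σ]
  have hθσ : expand _ p (θ.map σ) =
      ((Wst ℤ).preΨ' p).map (MvPolynomial.map (Int.castRingHom K)) := by
    rw [← map_expand, expand_eq_comp_X_pow, hθ, preΨ_ofNat, Polynomial.map_map, hσ]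
  have h_dvd (i : ℕ) (hi : 1 ≤ i) : (θ.map σ).coeff ((p - 1) / 2) ∣ (θ.map σ).coeff i :=
    coeff_dvd_coeff_of_expand_eq_map_preΨ' (by grind)
      (fun _ ↦ natCast_dvd_of_map_eq_zero p) hθσ hi
  simp only [← coeff_map]
  refine ⟨fun i _ hi ↦ h_dvd _ (by lia),
    isRelPrime_coeff_zero_of_isPrimitive_expand (p := p) ?_ h_dvd⟩
  rw [hθσ, ← map_preΨ', map_Wst]
  exact isPrimitive_preΨ'_Wst (mod_cast h_unit.ne_zero) hp_odd
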